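/- If the graph sequence {𝔾(t)} of the column stochastic matrix sequence {W(t)} is uniformly strongly connected, then there exist a constant c > 0, a constant μ ∈ [0,1), and a sequence {v(t)} of stochastic vectors in ℝ^n with all entries positive, such that for all i, j ∈ {1,…,n} and all t ≥ τ ≥ 0: | [W(t) W(t−1) ⋯ W(τ)]_{ij} − v_i(t) | ≤ c μ^{t−τ}. In particular, for each fixed τ the product W(t)⋯W(τ+1)W(τ) converges exponentially fast, as t → ∞, to the set of matrices of the form v𝟙ᵀ with v a positive stochastic vector. -/

import Mathlib

open Filter Finset

/-- `matProd M τ k = M (τ+k-1) * ⋯ * M (τ+1) * M τ` (the product of `k` factors),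
i.e. the state-transition matrix `Φ_M (τ+k, τ)`. -/
def matProd {n : ℕ} (M : ℕ → Matrix (Fin n) (Fin n) ℝ) (τ : ℕ) : ℕ → Matrix (Fin n) (Fin n) ℝ
  | 0 => 1
  | k + 1 => M (τ + k) * matProd M τ k

section aux

variable {n : ℕ} {W : ℕ → Matrix (Fin n) (Fin n) ℝ}

theorem mp_nonneg (h : ∀ t i j, 0 ≤ W t i j) (τ k : ℕ) : ∀ i j, 0 ≤ matProd W τ k i j := by
  induction k with
  | zero => intro i j; simp only [matProd, Matrix.one_apply]; split_ifs <;> norm_num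
  | succ k ih =>
    intro i j
    simp only [matProd, Matrix.mul_apply]
    exact Finset.sum_nonneg fun l _ => mul_nonneg (h _ _ _) (ih _ _)

theorem mp_col (h : ∀ t j, ∑ i, W t i j = 1) (τ k : ℕ) : ∀ j, ∑ i, matProd W τ k i j = 1 := by
  induction k with
  | zero => intro j; simp [matProd, Matrix.one_apply]
  | succ k ih =>
    intro j
    simp only [matProd, Matrix.mul_apply]
    rw [Finset.sum_comm]
    simp only [← Finset.sum_mul, h, one_mul, ih]

theorem mp_add (τ a b : ℕ) : matProd W τ (a + b) = matProd W (τ + a) b * matProd W τ a := by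
  induction b with
  | zero => simp [matProd]
  | succ b ih => rw [← add_assoc]; simp only [matProd]; rw [ih, Matrix.mul_assoc, add_assoc]

theorem mp_step (h : ∀ t i j, 0 ≤ W t i j) (τ k : ℕ) (i l j : Fin n)
    (h1 : 0 < W (τ + k) i l) (h2 : 0 < matProd W τ k l j) : 0 < matProd W τ (k+1) i j := by
  simp only [matProd, Matrix.mul_apply]
  exact Finset.sum_pos' (fun x _ => mul_nonneg (h _ _ _) (mp_nonneg h _ _ _ _))
    ⟨l, Finset.mem_univ _, mul_pos h1 h2⟩

theorem mp_mono (h : ∀ t i j, 0 ≤ W t i j) (hd : ∀ t i, 0 < W t i i) (τ k d : ℕ) (i j : Fin n)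
    (h2 : 0 < matProd W τ k i j) : 0 < matProd W τ (k+d) i j := by
  induction d with
  | zero => exact h2
  | succ d ih => exact mp_step h τ (k+d) i i j (hd _ _) ih

theorem mp_lb (h : ∀ t i j, 0 ≤ W t i j) (β : ℝ) (hβ : 0 < β)
    (hWβ : ∀ t i j, 0 < W t i j → β ≤ W t i j) (τ k : ℕ) :
    ∀ i j, 0 < matProd W τ k i j → β ^ k ≤ matProd W τ k i j := by
  induction k with
  | zero =>
    intro i j hp
    simp only [matProd, Matrix.one_apply] at hp ⊢
    split_ifs at hp ⊢ <;> simp_all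
  | succ k ih =>
    intro i j hp
    simp only [matProd, Matrix.mul_apply] at hp ⊢
    obtain ⟨l, _, hl⟩ := Finset.exists_lt_of_sum_lt (s := Finset.univ) (f := fun _ : Fin n => (0:ℝ))
      (by simpa using hp)
    have h1 : 0 < W (τ + k) i l := pos_of_mul_pos_left hl (mp_nonneg h _ _ _ _)
    have h2 : 0 < matProd W τ k l j := pos_of_mul_pos_right hl (h _ _ _)
    calc β ^ (k+1) = β * β ^ k := by ring
      _ ≤ W (τ + k) i l * matProd W τ k l j :=
        mul_le_mul (hWβ _ _ _ h1) (ih _ _ h2) (by positivity) h1.le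
      _ ≤ _ := Finset.single_le_sum (f := fun l => W (τ + k) i l * matProd W τ k l j)
        (fun x _ => mul_nonneg (h _ _ _) (mp_nonneg h _ _ _ _)) (Finset.mem_univ l)

theorem mp_pos (h : ∀ t i j, 0 ≤ W t i j) (hd : ∀ t i, 0 < W t i i) (L : ℕ)
    (hUSC : ∀ t : ℕ, ∀ i j : Fin n,
      Relation.TransGen (fun u v : Fin n => ∃ k ∈ Finset.Ico t (t + L), 0 < W k v u) i j)
    (τ : ℕ) (i j : Fin n) : 0 < matProd W τ (n * L) i j := by
  classical
  let S : ℕ → Finset (Fin n) := fun m => Finset.univ.filter fun i => 0 < matProd W τ (m * L) i j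
  have hS : ∀ m i, i ∈ S m ↔ 0 < matProd W τ (m * L) i j := fun m i => by simp [S]
  have hsub : ∀ m, S m ⊆ S (m+1) := by
    intro m i hi
    rw [hS] at hi ⊢
    rw [add_mul, one_mul]
    exact mp_mono h hd _ _ _ _ _ hi
  have hj : ∀ m, j ∈ S m := by
    intro m
    rw [hS]
    have := mp_mono h hd τ 0 (m*L) j j (by simp [matProd])
    simpa using this
  have key : ∀ m, S m = Finset.univ ∨ m + 1 ≤ (S m).card := by
    intro m
    induction m with
    | zero => right; exact Finset.card_pos.2 ⟨j, hj 0⟩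
    | succ m ih =>
      rcases ih with ih | ih
      · left
        exact Finset.univ_subset_iff.1 (ih ▸ hsub m)
      · by_cases he : S m = S (m+1)
        · left
          rw [Finset.eq_univ_iff_forall]
          intro x
          have hT := hUSC (τ + m * L) j x
          have hcl : ∀ u v, (∃ k ∈ Finset.Ico (τ + m*L) (τ + m*L + L), 0 < W k v u) →
              u ∈ S (m+1) → v ∈ S (m+1) := by
            rintro u v ⟨k, hk, hw⟩ hu
            rw [← he, hS] at hu
            rw [Finset.mem_Ico] at hk
            obtain ⟨d, rfl⟩ := Nat.exists_eq_add_of_le hk.1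
            have h1 := mp_mono h hd τ (m*L) d u j hu
            have h2 := mp_step h τ (m*L+d) v u j (by rwa [← add_assoc]) h1
            have h3 := mp_mono h hd τ (m*L+d+1) (L-d-1) v j h2
            rw [hS]
            have : (m+1)*L = m*L+d+1+(L-d-1) := by rw [add_mul]; omega
            rwa [this]
          induction hT with
          | single hr => exact hcl _ _ hr (hj _)
          | tail _ hr ih2 => exact hcl _ _ hr ih2
        · right
          have := Finset.card_lt_card ((hsub m).ssubset_of_ne he)
          omega
  rw [← hS]
  rcases key n with hk | hk
  · rw [hk]; exact Finset.mem_univ _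
  · have := Finset.card_le_univ (S n)
    rw [Fintype.card_fin] at this
    omega

theorem mp_contract (hn : 0 < n) (y : Fin n → ℝ) (A : Matrix (Fin n) (Fin n) ℝ) (δ r : ℝ)
    (hδ : 0 < δ) (hδ1 : δ ≤ 1)
    (hA : ∀ i j, δ ≤ A i j) (hc : ∀ j, ∑ i, A i j = 1) (hr : ∀ j j', y j - y j' ≤ r)
    (j j' : Fin n) : ∑ l, y l * A l j - ∑ l, y l * A l j' ≤ (1 - δ) * r := by
  have : Nonempty (Fin n) := ⟨⟨0, hn⟩⟩
  obtain ⟨p, hp⟩ := Finite.exists_max y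
  obtain ⟨q, hq⟩ := Finite.exists_min y
  have hA0 : ∀ i j, 0 ≤ A i j := fun i j => hδ.le.trans (hA i j)
  have h1 : (y p - y q) * δ ≤ ∑ l, (y p - y l) * A l j :=
    (mul_le_mul_of_nonneg_left (hA q j) (sub_nonneg.2 (hp q))).trans
      (Finset.single_le_sum (f := fun l => (y p - y l) * A l j)
        (fun l _ => mul_nonneg (sub_nonneg.2 (hp l)) (hA0 _ _)) (Finset.mem_univ q))
  have h2 : 0 ≤ ∑ l, (y l - y q) * A l j' :=
    Finset.sum_nonneg fun l _ => mul_nonneg (sub_nonneg.2 (hq l)) (hA0 _ _)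
  simp only [sub_mul, Finset.sum_sub_distrib, ← Finset.mul_sum, hc] at h1 h2
  have := mul_le_mul_of_nonneg_left (hr p q) (sub_nonneg.2 hδ1)
  linarith

end aux

theorem stmt_8
    (n : ℕ) (hn : 0 < n)
    (W : ℕ → Matrix (Fin n) (Fin n) ℝ)
    (hWnonneg : ∀ t i j, 0 ≤ W t i j)
    (hWcol : ∀ t j, ∑ i, W t i j = 1)
    (hWdiag : ∀ t i, 0 < W t i i)
    (β : ℝ) (hβ : 0 < β)
    (hWβ : ∀ t i j, 0 < W t i j → β ≤ W t i j)
    (L : ℕ) (hL : 0 < L)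
    (hUSC : ∀ t : ℕ, ∀ i j : Fin n,
      Relation.TransGen (fun u v : Fin n => ∃ k ∈ Finset.Ico t (t + L), 0 < W k v u) i j)
    :
    ∃ c : ℝ, 0 < c ∧ ∃ μ : ℝ, 0 ≤ μ ∧ μ < 1 ∧
      ∃ v : ℕ → Fin n → ℝ,
        (∀ t, (∀ i, 0 < v t i) ∧ ∑ i, v t i = 1) ∧
        ∀ τ k : ℕ, ∀ i j : Fin n,
          |matProd W τ (k + 1) i j - v (τ + k) i| ≤ c * μ ^ k := by
  have hnR : (0:ℝ) < n := by exact_mod_cast hn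
  obtain ⟨B, hBdef⟩ : ∃ B, B = n * L := ⟨_, rfl⟩
  have hB : 0 < B := hBdef ▸ Nat.mul_pos hn hL
  obtain ⟨δ, hδ, hδ1, hδβ⟩ : ∃ δ : ℝ, 0 < δ ∧ δ ≤ 1/2 ∧ δ ≤ β ^ B :=
    ⟨min (1/2) (β^B), lt_min (by norm_num) (by positivity), min_le_left _ _, min_le_right _ _⟩
  have hpos := mp_nonneg hWnonneg
  have hcol := mp_col hWcol
  have hlow : ∀ τ i j, δ ≤ matProd W τ B i j := fun τ i j =>
    hδβ.trans (mp_lb hWnonneg β hβ hWβ τ B i j (hBdef ▸ mp_pos hWnonneg hWdiag L hUSC τ i j))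
  have hle1 : ∀ τ k i j, matProd W τ k i j ≤ 1 := fun τ k i j => by
    rw [← hcol τ k j]
    exact Finset.single_le_sum (f := fun i => matProd W τ k i j)
      (fun x _ => hpos _ _ _ _) (Finset.mem_univ i)
  have hR : ∀ q s τ i j j',
      matProd W τ (B * q + s) i j - matProd W τ (B * q + s) i j' ≤ (1 - δ) ^ q := by
    intro q
    induction q with
    | zero =>
      intro s τ i j j'
      have h1 := hle1 τ (B*0+s) i j
      have h2 := hpos τ (B*0+s) i j'
      rw [pow_zero]; linarith
    | succ q ih =>
      intro s τ i j j'
      have e : B * (q+1) + s = B + (B * q + s) := by ring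
      rw [e, mp_add, pow_succ', Matrix.mul_apply, Matrix.mul_apply]
      exact mp_contract hn (fun l => matProd W (τ + B) (B*q+s) i l) _ δ _ hδ (by linarith)
        (hlow τ) (hcol τ B) (fun a b => ih s (τ+B) i a b) j j'
  have htot : ∀ τ k, ∑ i, ∑ j, matProd W τ k i j = (n:ℝ) := fun τ k => by
    refine Finset.sum_comm.trans ?_
    simp [hcol]
  have hρ : 0 < 1 - δ := by linarith
  obtain ⟨μ, hμ0, hμB⟩ : ∃ μ : ℝ, 0 < μ ∧ μ ^ B = 1 - δ :=
    ⟨(1-δ) ^ ((B:ℝ)⁻¹), Real.rpow_pos_of_pos hρ _, Real.rpow_inv_natCast_pow hρ.le hB.ne'⟩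
  have hμ1 : μ < 1 := by
    by_contra hcon
    have := one_le_pow₀ (n := B) (not_lt.1 hcon)
    linarith
  have hR2 : ∀ τ k i j j', matProd W τ (k+1) i j - matProd W τ (k+1) i j' ≤ 1/(1-δ) * μ ^ k := by
    intro τ k i j j'
    have e := Nat.div_add_mod (k+1) B
    have h1 := hR ((k+1)/B) ((k+1)%B) τ i j j'
    rw [e] at h1
    refine h1.trans ?_
    rw [one_div, inv_mul_eq_div, le_div_iff₀ hρ, ← pow_succ, ← hμB, ← pow_mul]
    apply pow_le_pow_of_le_one hμ0.le hμ1.le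
    have := Nat.mod_lt (k+1) hB
    rw [mul_add, mul_one]; omega
  refine ⟨1/(1-δ), by positivity, μ, hμ0.le, hμ1,
    fun t i => (∑ j, matProd W 0 (t+1) i j) / n, ?_, ?_⟩
  · intro t
    constructor
    · intro i
      apply div_pos _ hnR
      refine Finset.sum_pos' (fun x _ => hpos _ _ _ _) ⟨i, Finset.mem_univ _, ?_⟩
      have := mp_mono hWnonneg hWdiag 0 0 (t+1) i i (by simp [matProd])
      simpa using this
    · rw [← Finset.sum_div]
      exact (congrArg (· / (n:ℝ)) (htot _ _)).trans (div_self hnR.ne')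
  · intro τ k i j
    set p : Fin n → ℝ := fun l => (∑ a, matProd W 0 τ l a) / n with hp
    have hp0 : ∀ l, 0 ≤ p l := fun l =>
      div_nonneg (Finset.sum_nonneg fun a _ => hpos _ _ _ _) hnR.le
    have hp1 : ∑ l, p l = 1 := by
      simp only [hp]
      rw [← Finset.sum_div]
      exact (congrArg (· / (n:ℝ)) (htot _ _)).trans (div_self hnR.ne')
    have hv : (∑ a, matProd W 0 (τ + k + 1) i a) / n = ∑ l, matProd W τ (k+1) i l * p l := by
      rw [add_assoc, mp_add, zero_add]
      simp only [Matrix.mul_apply, hp]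
      rw [Finset.sum_comm, Finset.sum_div]
      simp only [← Finset.mul_sum, mul_div_assoc]
    have hd : matProd W τ (k+1) i j - (∑ a, matProd W 0 (τ + k + 1) i a) / n
        = ∑ l, (matProd W τ (k+1) i j - matProd W τ (k+1) i l) * p l := by
      simp only [hv, sub_mul, Finset.sum_sub_distrib, ← Finset.mul_sum, hp1, mul_one]
    show |matProd W τ (k+1) i j - (∑ a, matProd W 0 (τ + k + 1) i a) / n| ≤ _
    rw [hd]
    calc _ ≤ ∑ l, |(matProd W τ (k+1) i j - matProd W τ (k+1) i l) * p l| :=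
          Finset.abs_sum_le_sum_abs _ _
      _ ≤ ∑ l, (1/(1-δ) * μ ^ k) * p l := by
          apply Finset.sum_le_sum
          intro l _
          rw [abs_mul, abs_of_nonneg (hp0 l)]
          apply mul_le_mul_of_nonneg_right _ (hp0 l)
          rw [abs_sub_le_iff]
          exact ⟨hR2 _ _ _ _ _, hR2 _ _ _ _ _⟩
      _ = _ := by rw [← Finset.mul_sum, hp1, mul_one]
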